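/- arXiv:1407.6305 — 2 statements merged into one kernel-verified Lean document; each statement's English description precedes it below -/
import Mathlib

section
/- Let H be a complex Hilbert space and let T be a densely defined self-adjoint operator on H (i.e. T† = T). Let ν ∈ ℝ and suppose that the range {Tu − νu : u ∈ Dom T} is a closed subspace of H. Then either ν is an eigenvalue of T, i.e. there exists u ∈ Dom T with u ≠ 0 and Tu = νu, or the operator T − ν : Dom T → H is bijective with bounded inverse: every v ∈ H can be written as v = Tu − νu for a unique u ∈ Dom T, and there is a constant c > 0 with ‖u‖ ≤ c‖Tu − νu‖ for all u ∈ Dom T. -/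
/-!
For a densely defined closed operator `S` with closed range, the range of `S` is the orthogonal
complement of `ker S†`, and the open mapping theorem, applied to the projection of the graph of `S`
onto its second factor, bounds `‖u‖` by a multiple of `‖S u‖` as soon as `S` is injective.

For `S = T - ν` with `T` self-adjoint, `S† = T - conj ν`. The eigenvalues of `T` are real, so if `ν`
is not an eigenvalue then neither is `conj ν`, and both `S` and `S†` are injective.
-/

section ClosedOperator

variable {𝕜 E F : Type*} [NontriviallyNormedField 𝕜]
  [NormedAddCommGroup E] [NormedSpace 𝕜 E] [CompleteSpace E]
  [NormedAddCommGroup F] [NormedSpace 𝕜 F] [CompleteSpace F]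

theorem exists_norm_le_mul_of_isClosed_range {S : E →ₗ.[𝕜] F} (hS : S.IsClosed)
    (hker : LinearMap.ker S.toFun = ⊥) (hran : IsClosed (LinearMap.range S.toFun : Set F)) :
    ∃ c > 0, ∀ u : S.domain, ‖(u : E)‖ ≤ c * ‖S u‖ := by
  have hgraph : IsClosed (S.graph : Set (E × F)) := hS
  have : CompleteSpace S.graph := hgraph.completeSpace_coe
  let π : S.graph →L[𝕜] F := (ContinuousLinearMap.snd 𝕜 E F).comp S.graph.subtypeL
  have hπ_graph (u : S.domain) : π ⟨(u, S u), S.mem_graph u⟩ = S u := rfl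
  have hπ_injective : Function.Injective π := by
    rw [injective_iff_map_eq_zero]
    rintro ⟨p, hp⟩ hp_zero
    obtain ⟨u, rfl⟩ := S.mem_graph_iff'.mp hp
    have hu : u = 0 := LinearMap.ker_eq_bot'.mp hker u hp_zero
    simp [hu]
  have hπ_range : Set.range π = LinearMap.range S.toFun := by
    ext v
    constructor
    · rintro ⟨⟨p, hp⟩, rfl⟩
      obtain ⟨u, rfl⟩ := S.mem_graph_iff'.mp hp
      exact ⟨u, rfl⟩
    · rintro ⟨u, rfl⟩
      exact ⟨_, hπ_graph u⟩
  obtain ⟨K, hK⟩ :=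
    π.antilipschitz_of_injective_of_isClosed_range hπ_injective (hπ_range ▸ hran)
  refine ⟨K + 1, by positivity, fun u ↦ ?_⟩
  calc ‖(u : E)‖ ≤ ‖((u : E), S u)‖ := norm_fst_le ((u : E), S u)
    _ ≤ K * ‖S u‖ := π.bound_of_antilipschitz hK ⟨_, S.mem_graph u⟩
    _ ≤ (K + 1) * ‖S u‖ := by gcongr; simp

end ClosedOperator

section Adjoint

open scoped LinearPMap

variable {𝕜 E F : Type*} [RCLike 𝕜]
  [NormedAddCommGroup E] [InnerProductSpace 𝕜 E] [CompleteSpace E]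
  [NormedAddCommGroup F] [InnerProductSpace 𝕜 F]

theorem orthogonal_range_eq_map_ker_adjoint {S : E →ₗ.[𝕜] F}
    (hS : Dense (S.domain : Set E)) :
    (LinearMap.range S.toFun)ᗮ = (LinearMap.ker S†.toFun).map S†.domain.subtype := by
  ext w
  constructor
  · intro hw
    have hw_inner (x : S.domain) : inner 𝕜 (0 : E) x = inner 𝕜 w (S x) := by
      rw [inner_zero_left]
      exact ((Submodule.mem_orthogonal' _ _).mp hw (S x) ⟨x, rfl⟩).symm
    have hw_dom : w ∈ S†.domain := LinearPMap.mem_adjoint_domain_of_exists w ⟨0, hw_inner⟩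
    exact ⟨⟨w, hw_dom⟩, LinearPMap.adjoint_apply_eq hS _ hw_inner, rfl⟩
  · rintro ⟨w, hw, rfl⟩
    rw [Submodule.mem_orthogonal']
    rintro _ ⟨x, rfl⟩
    calc inner 𝕜 (w : F) (S x) = inner 𝕜 (S† w) (x : E) :=
          (LinearPMap.adjoint_isFormalAdjoint hS w x).symm
      _ = 0 := by rw [show S† w = 0 from hw, inner_zero_left]

theorem isFormalAdjoint_vadd [CompleteSpace F] {S : E →ₗ.[𝕜] F} {R : F →ₗ.[𝕜] E}
    (h : S.IsFormalAdjoint R) (A : E →L[𝕜] F) :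
    ((A : E →ₗ[𝕜] F) +ᵥ S).IsFormalAdjoint ((A.adjoint : F →ₗ[𝕜] E) +ᵥ R) := by
  intro x y
  rw [LinearPMap.vadd_apply, LinearPMap.vadd_apply, inner_add_left, inner_add_right]
  exact congrArg₂ _ (A.adjoint_inner_right x y).symm (h x y)

theorem adjoint_vadd_adjoint_le [CompleteSpace F] {S : E →ₗ.[𝕜] F}
    (hS : Dense (S.domain : Set E)) (A : E →L[𝕜] F) :
    (A.adjoint : F →ₗ[𝕜] E) +ᵥ S† ≤ ((A : E →ₗ[𝕜] F) +ᵥ S)† :=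
  (isFormalAdjoint_vadd (LinearPMap.adjoint_isFormalAdjoint hS).symm A).le_adjoint hS

theorem adjoint_vadd [CompleteSpace F] {S : E →ₗ.[𝕜] F} (hS : Dense (S.domain : Set E))
    (A : E →L[𝕜] F) :
    ((A : E →ₗ[𝕜] F) +ᵥ S)† = (A.adjoint : F →ₗ[𝕜] E) +ᵥ S† := by
  have hle := adjoint_vadd_adjoint_le hS A
  have hdomain_le : ((A : E →ₗ[𝕜] F) +ᵥ S)†.domain ≤ S†.domain := by
    -- Perturbing `A + S` by `-A` gives back `S`, which reverses the inclusion `hle` of domains.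
    have h := (adjoint_vadd_adjoint_le (S := (A : E →ₗ[𝕜] F) +ᵥ S) hS (-A)).1
    rwa [ContinuousLinearMap.toLinearMap_neg, neg_vadd_vadd] at h
  exact (LinearPMap.eq_of_le_of_domain_eq hle (le_antisymm hle.1 hdomain_le)).symm

theorem range_eq_top_of_ker_adjoint_eq_bot [CompleteSpace F] {S : E →ₗ.[𝕜] F}
    (hS : Dense (S.domain : Set E)) (hker : LinearMap.ker S†.toFun = ⊥)
    (hran : IsClosed (LinearMap.range S.toFun : Set F)) :
    LinearMap.range S.toFun = ⊤ := by
  have : CompleteSpace (LinearMap.range S.toFun) := hran.completeSpace_coe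
  rw [← Submodule.orthogonal_eq_bot_iff, orthogonal_range_eq_map_ker_adjoint hS, hker,
    Submodule.map_bot]

end Adjoint

section SelfAdjoint

open scoped LinearPMap ComplexConjugate

variable {𝕜 H : Type*} [RCLike 𝕜] [NormedAddCommGroup H] [InnerProductSpace 𝕜 H]

/-- The operator `T - ν` with the domain of `T`. It is encoded as the perturbation of `T` by the
everywhere defined operator `-ν`, so that its domain is `T.domain` by definition. -/
def subScalar (T : H →ₗ.[𝕜] H) (ν : 𝕜) : H →ₗ.[𝕜] H :=
  ((-(ν • ContinuousLinearMap.id 𝕜 H) : H →L[𝕜] H) : H →ₗ[𝕜] H) +ᵥ T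

theorem subScalar_apply (T : H →ₗ.[𝕜] H) (ν : 𝕜) (u : T.domain) :
    subScalar T ν u = T u - ν • (u : H) :=
  neg_add_eq_sub _ _

theorem coe_range_subScalar (T : H →ₗ.[𝕜] H) (ν : 𝕜) :
    (LinearMap.range (subScalar T ν).toFun : Set H) =
      {v | ∃ u : T.domain, T u - ν • (u : H) = v} := by
  simp only [← subScalar_apply]
  rfl

theorem ker_subScalar_eq_bot_iff {T : H →ₗ.[𝕜] H} {ν : 𝕜} :
    LinearMap.ker (subScalar T ν).toFun = ⊥ ↔ ∀ u : T.domain, T u = ν • (u : H) → u = 0 := by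
  simp only [← sub_eq_zero (b := ν • _), ← subScalar_apply]
  exact LinearMap.ker_eq_bot'

theorem conj_eigenvalue_eq_self {T : H →ₗ.[𝕜] H} (hT : T.IsFormalAdjoint T) {μ : 𝕜}
    {u : T.domain} (hu : u ≠ 0) (hTu : T u = μ • (u : H)) : conj μ = μ := by
  have hinner : inner 𝕜 (u : H) (u : H) ≠ 0 :=
    inner_self_ne_zero.mpr (Submodule.coe_eq_zero.not.mpr hu)
  refine mul_right_cancel₀ hinner ?_
  rw [← inner_smul_left, ← inner_smul_right, ← hTu]
  exact hT u u

theorem ker_subScalar_conj_eq_bot {T : H →ₗ.[𝕜] H} (hT : T.IsFormalAdjoint T) {ν : 𝕜}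
    (hker : LinearMap.ker (subScalar T ν).toFun = ⊥) :
    LinearMap.ker (subScalar T (conj ν)).toFun = ⊥ := by
  rw [ker_subScalar_eq_bot_iff] at hker ⊢
  intro u hTu
  by_contra hu
  have hν : ν = conj ν := by simpa only [RCLike.conj_conj] using conj_eigenvalue_eq_self hT hu hTu
  exact hu (hker u (by rwa [← hν] at hTu))

variable [CompleteSpace H]

theorem adjoint_subScalar {T : H →ₗ.[𝕜] H} (hT : Dense (T.domain : Set H)) (ν : 𝕜) :
    (subScalar T ν)† = subScalar T† (conj ν) := by
  simp only [subScalar, adjoint_vadd hT, map_neg, map_smulₛₗ, ContinuousLinearMap.adjoint_id]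

theorem adjoint_subScalar_of_isSelfAdjoint {T : H →ₗ.[𝕜] H} (hT : IsSelfAdjoint T) (ν : 𝕜) :
    (subScalar T ν)† = subScalar T (conj ν) := by
  rw [adjoint_subScalar hT.dense_domain, LinearPMap.isSelfAdjoint_def.mp hT]

theorem isClosed_subScalar {T : H →ₗ.[𝕜] H} (hT : IsSelfAdjoint T) (ν : 𝕜) :
    (subScalar T ν).IsClosed := by
  rw [← RCLike.conj_conj ν, ← adjoint_subScalar_of_isSelfAdjoint hT]
  exact LinearPMap.adjoint_isClosed hT.dense_domain

theorem isFormalAdjoint_self_of_isSelfAdjoint {T : H →ₗ.[𝕜] H} (hT : IsSelfAdjoint T) :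
    T.IsFormalAdjoint T := by
  simpa only [LinearPMap.isSelfAdjoint_def.mp hT] using
    LinearPMap.adjoint_isFormalAdjoint hT.dense_domain

theorem stmt4_general (T : H →ₗ.[𝕜] H) (hT : IsSelfAdjoint T) (ν : 𝕜)
    (hran : IsClosed {v : H | ∃ u : T.domain, T u - ν • (u : H) = v}) :
    (∃ u : T.domain, (u : H) ≠ 0 ∧ T u = ν • (u : H)) ∨
      ((∀ v : H, ∃! u : T.domain, T u - ν • (u : H) = v) ∧
        ∃ c > 0, ∀ u : T.domain, ‖(u : H)‖ ≤ c * ‖T u - ν • (u : H)‖) := by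
  refine or_iff_not_imp_left.mpr fun hν ↦ ?_
  have hker : LinearMap.ker (subScalar T ν).toFun = ⊥ :=
    ker_subScalar_eq_bot_iff.mpr fun u hTu ↦
      by_contra fun hu ↦ hν ⟨u, Submodule.coe_eq_zero.not.mpr hu, hTu⟩
  have hker_adjoint : LinearMap.ker (subScalar T ν)†.toFun = ⊥ := by
    rw [adjoint_subScalar_of_isSelfAdjoint hT]
    exact ker_subScalar_conj_eq_bot (isFormalAdjoint_self_of_isSelfAdjoint hT) hker
  rw [← coe_range_subScalar] at hran
  have hbijective : Function.Bijective (subScalar T ν).toFun :=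
    ⟨LinearMap.ker_eq_bot.mp hker, LinearMap.range_eq_top.mp <|
      range_eq_top_of_ker_adjoint_eq_bot hT.dense_domain hker_adjoint hran⟩
  simp only [← subScalar_apply]
  exact ⟨hbijective.existsUnique,
    exists_norm_le_mul_of_isClosed_range (isClosed_subScalar hT ν) hker hran⟩

end SelfAdjoint

/-- Let `H` be a complex Hilbert space and `T` a densely defined self-adjoint
operator on `H` (i.e. `T† = T`).  Let `ν ∈ ℝ` and suppose the range
`{T u - ν u : u ∈ Dom T}` is a closed subspace of `H`.  Then either `ν` is an eigenvalue
of `T`, or `T - ν : Dom T → H` is bijective with bounded inverse: every `v ∈ H` is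
`T u - ν u` for a unique `u ∈ Dom T` and there is `c > 0` with `‖u‖ ≤ c ‖T u - ν u‖`
for all `u ∈ Dom T`. -/
theorem stmt4 {H : Type*}
    [NormedAddCommGroup H] [InnerProductSpace ℂ H] [CompleteSpace H]
    (T : H →ₗ.[ℂ] H)
    (hdense : Dense (T.domain : Set H))
    (hsa : IsSelfAdjoint T)
    (ν : ℝ)
    (hran : IsClosed {v : H | ∃ u : T.domain, T u - (ν : ℂ) • (u : H) = v}) :
    (∃ u : T.domain, (u : H) ≠ 0 ∧ T u = (ν : ℂ) • (u : H)) ∨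
      ((∀ v : H, ∃! u : T.domain, T u - (ν : ℂ) • (u : H) = v) ∧
        ∃ c > 0, ∀ u : T.domain, ‖(u : H)‖ ≤ c * ‖T u - (ν : ℂ) • (u : H)‖) :=
  stmt4_general T hsa (ν : ℂ) hran
end

section
/- Let H₀, H₁, H₂ be complex Hilbert spaces and let d₀ (from H₀ to H₁) and d₁ (from H₁ to H₂) be densely defined linear operators forming a complex, i.e. d₀(Dom d₀) ⊆ Dom d₁ and d₁(d₀ x) = 0 for all x ∈ Dom d₀. Let u ∈ Dom d₁ ∩ Dom d₀†. Suppose w ∈ Dom d₁† satisfies d₁† w ∈ Dom d₁ and d₁(d₁† w) = d₁ u, and suppose v ∈ Dom d₀ satisfies d₀ v ∈ Dom d₀† and d₀†(d₀ v) = d₀† u. Then d₁† w ∈ Dom d₀† with d₀†(d₁† w) = 0, and the element r := u − d₁† w − d₀ v satisfies r ∈ Dom d₁ ∩ Dom d₀†, d₁ r = 0, and d₀† r = 0 (i.e. u − d₁† w − d₀ v is a harmonic element of the complex). -/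
/-!
Taking orthogonal complements in `ran d₀ ≤ ker d₁` gives
`ran d₁† ≤ (ker d₁)ᗮ ≤ (ran d₀)ᗮ = ker d₀†`, so the adjoints form a complex running backwards.
Hence the correction `d₁† w`, chosen to cancel `d₁ u`, is invisible to `d₀†`, while the correction
`d₀ v`, chosen to cancel `d₀† u`, is invisible to `d₁`.
-/

open scoped LinearPMap

section NullSpace

variable {R E F : Type*} [Ring R] [AddCommGroup E] [Module R E] [AddCommGroup F] [Module R F]

/-- The kernel of a partially defined operator `T`, as a submodule of the ambient space rather than
of `T.domain` (which is where `T.toFun.ker` lives), so that kernels of operators with different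
domains can be compared. -/
def nullSpace (T : E →ₗ.[R] F) : Submodule R E :=
  T.toFun.ker.map T.domain.subtype

theorem mem_nullSpace {T : E →ₗ.[R] F} {x : E} :
    x ∈ nullSpace T ↔ ∃ hx : x ∈ T.domain, T ⟨x, hx⟩ = 0 := by
  simp [nullSpace]

theorem sub_mem_nullSpace {T : E →ₗ.[R] F} {x y : T.domain} (h : T x = T y) :
    (x - y : E) ∈ nullSpace T :=
  mem_nullSpace.2 ⟨(x - y).2, (T.map_sub x y).trans (sub_eq_zero.2 h)⟩

end NullSpace

section Adjoint

variable {𝕜 E F G : Type*} [RCLike 𝕜]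
  [NormedAddCommGroup E] [InnerProductSpace 𝕜 E] [CompleteSpace E]
  [NormedAddCommGroup F] [InnerProductSpace 𝕜 F]
  [NormedAddCommGroup G] [InnerProductSpace 𝕜 G]

theorem nullSpace_adjoint {T : E →ₗ.[𝕜] F} (hT : Dense (T.domain : Set E)) :
    nullSpace T† = T.toFun.rangeᗮ := by
  ext y
  rw [mem_nullSpace, Submodule.mem_orthogonal']
  constructor
  · rintro ⟨hy, hTy⟩ _ ⟨x, rfl⟩
    calc inner 𝕜 y (T x) = inner 𝕜 (T† ⟨y, hy⟩) (x : E) :=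
          (LinearPMap.adjoint_isFormalAdjoint hT ⟨y, hy⟩ x).symm
      _ = 0 := by rw [hTy, inner_zero_left]
  · intro hy
    have hzero (x : T.domain) : inner 𝕜 (0 : E) (x : E) = inner 𝕜 y (T x) := by
      rw [inner_zero_left, hy (T x) ⟨x, rfl⟩]
    exact ⟨LinearPMap.mem_adjoint_domain_of_exists y ⟨0, hzero⟩,
      LinearPMap.adjoint_apply_eq hT _ hzero⟩

theorem range_adjoint_le_orthogonal_nullSpace {T : E →ₗ.[𝕜] F}
    (hT : Dense (T.domain : Set E)) : T†.toFun.range ≤ (nullSpace T)ᗮ := by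
  rintro _ ⟨y, rfl⟩
  rw [Submodule.mem_orthogonal']
  intro x hx
  obtain ⟨hxT, hTx⟩ := mem_nullSpace.1 hx
  calc inner 𝕜 (T† y) x = inner 𝕜 (y : F) (T ⟨x, hxT⟩) :=
        LinearPMap.adjoint_isFormalAdjoint hT y ⟨x, hxT⟩
    _ = 0 := by rw [hTx, inner_zero_right]

/-- The space `ker T ∩ ker S†` of harmonic elements in the middle of a complex `E → F → G` with
differentials `S` and `T`. The complex property is not part of the definition. -/
noncomputable def harmonicSpace (S : E →ₗ.[𝕜] F) (T : F →ₗ.[𝕜] G) : Submodule 𝕜 F :=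
  nullSpace T ⊓ nullSpace S†

variable [CompleteSpace F] {S : E →ₗ.[𝕜] F} {T : F →ₗ.[𝕜] G}

theorem range_adjoint_le_nullSpace_adjoint (hS : Dense (S.domain : Set E))
    (hT : Dense (T.domain : Set F)) (hST : S.toFun.range ≤ nullSpace T) :
    T†.toFun.range ≤ nullSpace S† :=
  calc T†.toFun.range ≤ (nullSpace T)ᗮ := range_adjoint_le_orthogonal_nullSpace hT
    _ ≤ S.toFun.rangeᗮ := Submodule.orthogonal_le hST
    _ = nullSpace S† := (nullSpace_adjoint hS).symm

theorem sub_sub_mem_harmonicSpace (hS : Dense (S.domain : Set E))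
    (hT : Dense (T.domain : Set F)) (hST : S.toFun.range ≤ nullSpace T) {u y z : F}
    (hy : y ∈ T†.toFun.range) (hz : z ∈ S.toFun.range)
    (huy : u - y ∈ nullSpace T) (huz : u - z ∈ nullSpace S†) :
    u - y - z ∈ harmonicSpace S T := by
  refine ⟨sub_mem huy (hST hz), ?_⟩
  rw [sub_right_comm]
  exact sub_mem huz (range_adjoint_le_nullSpace_adjoint hS hT hST hy)

end Adjoint

theorem stmt11_general {𝕜 H₀ H₁ H₂ : Type*} [RCLike 𝕜]
    [NormedAddCommGroup H₀] [InnerProductSpace 𝕜 H₀] [CompleteSpace H₀]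
    [NormedAddCommGroup H₁] [InnerProductSpace 𝕜 H₁] [CompleteSpace H₁]
    [NormedAddCommGroup H₂] [InnerProductSpace 𝕜 H₂]
    (d₀ : H₀ →ₗ.[𝕜] H₁) (d₁ : H₁ →ₗ.[𝕜] H₂)
    (hdense₀ : Dense (d₀.domain : Set H₀))
    (hdense₁ : Dense (d₁.domain : Set H₁))
    (hcomp : ∀ x : d₀.domain, d₀ x ∈ d₁.domain)
    (hzero : ∀ x : d₀.domain, d₁ ⟨d₀ x, hcomp x⟩ = 0)
    (u : H₁) (hu₁ : u ∈ d₁.domain) (hu₀ : u ∈ d₀†.domain)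
    (w : d₁†.domain)
    (hw : d₁† w ∈ d₁.domain)
    (hweq : d₁ ⟨d₁† w, hw⟩ = d₁ ⟨u, hu₁⟩)
    (v : d₀.domain)
    (hv : d₀ v ∈ d₀†.domain)
    (hveq : d₀† ⟨d₀ v, hv⟩ = d₀† ⟨u, hu₀⟩) :
    ∃ h₁ : d₁† w ∈ d₀†.domain,
      d₀† ⟨d₁† w, h₁⟩ = 0 ∧
      ∃ (h₂ : u - d₁† w - d₀ v ∈ d₁.domain)
        (h₃ : u - d₁† w - d₀ v ∈ d₀†.domain),
        d₁ ⟨u - d₁† w - d₀ v, h₂⟩ = 0 ∧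
        d₀† ⟨u - d₁† w - d₀ v, h₃⟩ = 0 := by
  have hrange : d₀.toFun.range ≤ nullSpace d₁ := by
    rintro _ ⟨x, rfl⟩
    exact mem_nullSpace.2 ⟨hcomp x, hzero x⟩
  have hd₁w : d₁† w ∈ nullSpace d₀† :=
    range_adjoint_le_nullSpace_adjoint hdense₀ hdense₁ hrange ⟨w, rfl⟩
  have hharmonic : u - d₁† w - d₀ v ∈ harmonicSpace d₀ d₁ :=
    sub_sub_mem_harmonicSpace hdense₀ hdense₁ hrange ⟨w, rfl⟩ ⟨v, rfl⟩
      (sub_mem_nullSpace hweq.symm) (sub_mem_nullSpace hveq.symm)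
  obtain ⟨h₁, hd₀d₁w⟩ := mem_nullSpace.1 hd₁w
  obtain ⟨h₂, hd₁r⟩ := mem_nullSpace.1 hharmonic.1
  obtain ⟨h₃, hd₀r⟩ := mem_nullSpace.1 hharmonic.2
  exact ⟨h₁, hd₀d₁w, h₂, h₃, hd₁r, hd₀r⟩

/-- Let `H₀, H₁, H₂` be complex Hilbert spaces and `d₀ : H₀ → H₁`,
`d₁ : H₁ → H₂` densely defined operators forming a complex (`d₀ (Dom d₀) ⊆ Dom d₁` and
`d₁ ∘ d₀ = 0`).  Let `u ∈ Dom d₁ ∩ Dom d₀†`.  If `w ∈ Dom d₁†` satisfies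
`d₁† w ∈ Dom d₁` and `d₁ (d₁† w) = d₁ u`, and `v ∈ Dom d₀` satisfies `d₀ v ∈ Dom d₀†`
and `d₀† (d₀ v) = d₀† u`, then `d₁† w ∈ Dom d₀†` with `d₀† (d₁† w) = 0`, and
`r := u - d₁† w - d₀ v` satisfies `r ∈ Dom d₁ ∩ Dom d₀†`, `d₁ r = 0` and `d₀† r = 0`. -/
theorem stmt11 {H₀ H₁ H₂ : Type*}
    [NormedAddCommGroup H₀] [InnerProductSpace ℂ H₀] [CompleteSpace H₀]
    [NormedAddCommGroup H₁] [InnerProductSpace ℂ H₁] [CompleteSpace H₁]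
    [NormedAddCommGroup H₂] [InnerProductSpace ℂ H₂] [CompleteSpace H₂]
    (d₀ : H₀ →ₗ.[ℂ] H₁) (d₁ : H₁ →ₗ.[ℂ] H₂)
    (hdense₀ : Dense (d₀.domain : Set H₀))
    (hdense₁ : Dense (d₁.domain : Set H₁))
    (hcomp : ∀ x : d₀.domain, d₀ x ∈ d₁.domain)
    (hzero : ∀ x : d₀.domain, d₁ ⟨d₀ x, hcomp x⟩ = 0)
    (u : H₁) (hu₁ : u ∈ d₁.domain) (hu₀ : u ∈ d₀.adjoint.domain)
    (w : d₁.adjoint.domain)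
    (hw : d₁.adjoint w ∈ d₁.domain)
    (hweq : d₁ ⟨d₁.adjoint w, hw⟩ = d₁ ⟨u, hu₁⟩)
    (v : d₀.domain)
    (hv : d₀ v ∈ d₀.adjoint.domain)
    (hveq : d₀.adjoint ⟨d₀ v, hv⟩ = d₀.adjoint ⟨u, hu₀⟩) :
    ∃ h₁ : d₁.adjoint w ∈ d₀.adjoint.domain,
      d₀.adjoint ⟨d₁.adjoint w, h₁⟩ = 0 ∧
      ∃ (h₂ : u - d₁.adjoint w - d₀ v ∈ d₁.domain)
        (h₃ : u - d₁.adjoint w - d₀ v ∈ d₀.adjoint.domain),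
        d₁ ⟨u - d₁.adjoint w - d₀ v, h₂⟩ = 0 ∧
        d₀.adjoint ⟨u - d₁.adjoint w - d₀ v, h₃⟩ = 0 := by
  exact stmt11_general d₀ d₁ hdense₀ hdense₁ hcomp hzero u hu₁ hu₀ w hw hweq v hv hveq
end
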